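/- Let α ∈ [0,1] be irrational and let 0 < δ ≤ ∞. Then the log-Hausdorff dimension of the exact resonance level set D(δ) equals 1: dim_{H,log}(D(δ)) = 1. -/

import Mathlib

open Filter MeasureTheory Set
open scoped ENNReal NNReal Classical

/-- Distance from `x : ℝ` to the nearest integer, i.e. `‖x‖_{ℝ/ℤ}`. -/
noncomputable def distZ (x : ℝ) : ℝ := |x - round x|

/-- The `ω`-Hausdorff measure of a set `S ⊆ ℝ`: the limit as `ε → 0⁺` (equivalently the
supremum over `ε > 0`, by monotonicity) of the infimum of `∑ᵢ ω (bᵢ - aᵢ)` over countable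
covers of `S` by intervals `(aᵢ, bᵢ)` of length at most `ε`. -/
noncomputable def gaugeHaus (ω : ℝ → ℝ) (S : Set ℝ) : ℝ≥0∞ :=
  ⨆ (ε : ℝ) (_ : 0 < ε),
    ⨅ (a : ℕ → ℝ) (b : ℕ → ℝ) (_ : S ⊆ ⋃ i, Set.Ioo (a i) (b i))
      (_ : ∀ i, a i ≤ b i ∧ b i - a i ≤ ε),
      ∑' i, ENNReal.ofReal (ω (b i - a i))

/-- The gauge function `ω_s(r) = (-log r)^{-s}` for `0 < r < 1`, and `ω_s(0) = 0`. -/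
noncomputable def omegaS (s : ℝ) (r : ℝ) : ℝ := if 0 < r then (-Real.log r) ^ (-s) else 0

/-- The resonance strength `δ(α, x) = limsup_{|k| → ∞} (-log ‖x - kα‖_{ℝ/ℤ}) / |k|`,
with the convention that it is `∞` when `x ≡ kα (mod ℤ)` for some `k ∈ ℤ`. -/

noncomputable def resStrength (α x : ℝ) : ℝ≥0∞ :=
  if ∃ k m : ℤ, x = (k : ℝ) * α + (m : ℝ) then ⊤
  else Filter.limsup
    (fun k : ℤ => ENNReal.ofReal (-Real.log (distZ (x - (k : ℝ) * α)) / |(k : ℝ)|))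
    Filter.cofinite

/-- The exact resonance level set `D(δ) = {x ∈ [0,1] : δ(α,x) = δ}`. -/
noncomputable def resSet (α : ℝ) (δ : ℝ≥0∞) : Set ℝ :=
  {x ∈ Set.Icc (0 : ℝ) 1 | resStrength α x = δ}


/-- The log-Hausdorff dimension: `dim_{H,log}(S) = inf {s > 0 : ℋ^{ω_s}(S) < ∞}`. -/
noncomputable def logHausDim (S : Set ℝ) : ℝ :=
  sInf {s : ℝ | 0 < s ∧ gaugeHaus (omegaS s) S < ⊤}

/-!
*Upper bound.* A point with `resStrength α x > 2 * d` is a multiple of `α`, or lies within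
`exp (-d * (|k| + 1))` of `k * α` for infinitely many `k`, and `∑ |k| ^ (-s)` converges for `s > 1`.

*Lower bound.* Choose a rate `ψ` with `-log (ψ n) / n → δ`. A cover of total `omegaS s` weight at
most `T` is avoided by a point which `k • α` approximates to within `ψ k` infinitely often, but
which no multiple of `α` approximates much better. Such a point is found in nested intervals of
length comparable to `ψ k`, each placed next to a multiple `k • α`. On infinitely many scales `N`
the points `k • α`, `N ≤ k < 2 * N`, are separated by a multiple of `1 / N`, and a positive
proportion of them lies in the current interval. The intervals of the cover longer than `1 / N` are
too sparse to spoil most of these candidates. A shorter one meets at most one candidate, so some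
candidate meets weight of order `1 / N` only, hence only intervals of length at most
`exp (-D * N ^ (1 / s))`. This is negligible compared to `ψ (2 * N)` since `s < 1`, and the cover is
sparse again on that candidate.
-/

open Metric
open scoped Topology

lemma distZ_eq_norm (x : ℝ) : distZ x = ‖(x : UnitAddCircle)‖ := UnitAddCircle.norm_eq.symm

lemma norm_coe_unitAddCircle_le (x : ℝ) : ‖(x : UnitAddCircle)‖ ≤ |x| := by
  simpa only [UnitAddCircle.norm_eq, Int.cast_zero, sub_zero] using round_le x 0

section Arithmetic

variable {α : ℝ}

lemma exists_rat_le_den_abs_sub_lt_one_div_den_sq (hα : Irrational α) (Q : ℕ) :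
    ∃ r : ℚ, Q ≤ r.den ∧ |α - r| < 1 / (r.den : ℝ) ^ 2 := by
  have hfar := (hα.eventually_forall_le_dist_cast_rat_of_den_le Q).filter_mono
    (nhdsWithin_le_nhds (s := Ioi 0))
  obtain ⟨ε, hε, hε0⟩ := (hfar.and self_mem_nhdsWithin).exists
  obtain ⟨n, hn⟩ := exists_nat_one_div_lt hε0
  obtain ⟨r, hr, hrn⟩ := Real.exists_rat_abs_sub_le_and_den_le α n.succ_pos
  have hd : (1 : ℝ) ≤ r.den := mod_cast r.den_pos
  have hrn' : (r.den : ℝ) ≤ n + 1 := mod_cast hrn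
  push_cast at hr
  refine ⟨r, ?_, hr.trans_lt (one_div_lt_one_div_of_lt (by positivity) (by nlinarith))⟩
  by_contra! hlt
  have hεr : ε ≤ |α - r| := hε r hlt.le
  have : 1 / (((n : ℝ) + 1 + 1) * r.den) ≤ 1 / ((n : ℝ) + 1) :=
    one_div_le_one_div_of_le (by positivity) (by nlinarith)
  linarith

lemma one_div_le_norm_of_nsmul_eq_zero {v : UnitAddCircle} (hv : v ≠ 0) {q : ℕ} (hq : 0 < q)
    (hqv : q • v = 0) : 1 / (q : ℝ) ≤ ‖v‖ := by
  have hle := AddCircle.le_add_order_smul_norm_of_isOfFinAddOrder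
    (isOfFinAddOrder_iff_nsmul_eq_zero.2 ⟨q, hq, hqv⟩) hv
  have horder : (addOrderOf v : ℝ) ≤ q := mod_cast addOrderOf_le_of_nsmul_eq_zero hq hqv
  rw [nsmul_eq_mul] at hle
  rw [div_le_iff₀' (by positivity)]
  exact hle.trans (by gcongr)

/-- Take `8 * N` just below a denominator `q` with `|α - p / q| < 1 / q ^ 2`: for `0 < |j| ≤ q / 2`
the multiples `j * (p / q)` stay `1 / q` away from `0`, and `j * α` is within `1 / (2 * q)` of
them. -/
lemma frequently_forall_le_norm_zsmul (hα : Irrational α) :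
    ∃ᶠ N : ℕ in atTop, ∀ j : ℤ, j ≠ 0 → |j| ≤ 4 * N →
      1 / (32 * (N : ℝ)) ≤ ‖j • (α : UnitAddCircle)‖ := by
  refine frequently_atTop.2 fun N₀ => ?_
  obtain ⟨r, hr, hrα⟩ := exists_rat_le_den_abs_sub_lt_one_div_den_sq hα (8 * (N₀ + 1))
  set q := r.den
  refine ⟨q / 8, by lia, fun j hj hjN => ?_⟩
  have hq : (0 : ℝ) < q := mod_cast r.den_pos
  have hjq : |(j : ℝ)| ≤ q / 2 := by
    rw [le_div_iff₀ two_pos]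
    exact_mod_cast (by lia : |j| * 2 ≤ q)
  set τ : UnitAddCircle := ((r : ℝ) : UnitAddCircle)
  have hτ : addOrderOf τ = q := by simpa using AddCircle.addOrderOf_coe_rat (p := (1 : ℝ)) (q := r)
  have hjτ : j • τ ≠ 0 := fun h => by
    have := Int.le_of_dvd (abs_pos.2 hj)
      ((dvd_abs _ _).2 (hτ ▸ addOrderOf_dvd_iff_zsmul_eq_zero.2 h))
    lia
  have hqτ : q • j • τ = 0 := by rw [smul_comm, ← hτ, addOrderOf_nsmul_eq_zero, smul_zero]
  have hrat : 1 / (q : ℝ) ≤ ‖j • τ‖ := one_div_le_norm_of_nsmul_eq_zero hjτ r.den_pos hqτ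
  have hdiff : ‖j • (α : UnitAddCircle) - j • τ‖ ≤ 1 / (2 * q) := by
    rw [← smul_sub, ← AddCircle.coe_sub, ← AddCircle.coe_zsmul, zsmul_eq_mul]
    calc ‖((j * (α - r) : ℝ) : UnitAddCircle)‖ ≤ |j * (α - r)| := norm_coe_unitAddCircle_le _
      _ ≤ q / 2 * (1 / (q : ℝ) ^ 2) := by rw [abs_mul]; gcongr
      _ = 1 / (2 * q) := by field_simp
  calc 1 / (32 * ((q / 8 : ℕ) : ℝ)) ≤ 1 / (2 * q) := by
        refine one_div_le_one_div_of_le (by positivity) ?_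
        exact_mod_cast (by lia : 2 * q ≤ 32 * (q / 8))
    _ = 1 / (q : ℝ) - 1 / (2 * q) := by field_simp; norm_num
    _ ≤ ‖j • τ‖ - ‖j • (α : UnitAddCircle) - j • τ‖ := by gcongr
    _ ≤ ‖j • (α : UnitAddCircle)‖ := by
      rw [norm_sub_rev]
      linarith [norm_sub_norm_le (j • τ) (j • (α : UnitAddCircle))]

end Arithmetic

section Recurrence

/-- Every `k` in `[N, 2 * N - L)` is charged to some `k + n` with `n ∈ F` satisfying `P`, and each
such number is charged at most `F.card` times. -/
lemma le_card_mul_card_filter_add {P : ℕ → Prop} {F : Finset ℕ} {L : ℕ} (hL : ∀ n ∈ F, n ≤ L)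
    (hP : ∀ k, ∃ n ∈ F, P (k + n)) (N : ℕ) :
    N ≤ F.card * ((Finset.Ico N (2 * N)).filter P).card + L := by
  choose n hnF hnP using hP
  have hmaps : ∀ k ∈ Finset.Ico N (2 * N - L),
      (n k, k + n k) ∈ F ×ˢ (Finset.Ico N (2 * N)).filter P := fun k hk => by
    have := hL _ (hnF k)
    simp only [Finset.mem_product, Finset.mem_filter, Finset.mem_Ico] at hk ⊢
    exact ⟨hnF k, by lia, hnP k⟩
  have hcard := Finset.card_le_card_of_injOn _ hmaps fun k _ l _ h => by
    simp only [Prod.mk.injEq] at h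
    lia
  rw [Finset.card_product, Nat.card_Ico] at hcard
  lia

lemma exists_dist_coe_add_half_div_le {m : ℕ} (hm : 0 < m) (y : UnitAddCircle) :
    ∃ i < m, dist y (((i + 1 / 2) / m : ℝ) : UnitAddCircle) ≤ 1 / (2 * m) := by
  obtain ⟨x, hx, rfl⟩ := (AddCircle.coe_image_Ico_eq (1 : ℝ) 0).ge (mem_univ y)
  simp only [zero_add, mem_Ico] at hx
  have hm0 : (0 : ℝ) < m := mod_cast hm
  have hi : (⌊x * m⌋₊ : ℝ) ≤ x * m := Nat.floor_le (mul_nonneg hx.1 hm0.le)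
  have hi' : x * m < ⌊x * m⌋₊ + 1 := Nat.lt_floor_add_one _
  refine ⟨⌊x * m⌋₊, (Nat.floor_lt (mul_nonneg hx.1 hm0.le)).2 (by nlinarith), ?_⟩
  rw [dist_eq_norm, ← AddCircle.coe_sub]
  refine (norm_coe_unitAddCircle_le _).trans ?_
  have hscale : x - (⌊x * m⌋₊ + 1 / 2) / m = (x * m - (⌊x * m⌋₊ + 1 / 2)) * (1 / m) := by
    field_simp
  rw [hscale, abs_mul, abs_of_pos (one_div_pos.2 hm0), ← one_div_mul_one_div]
  gcongr
  exact abs_le.2 ⟨by linarith, by linarith⟩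

lemma exists_finset_forall_add_zsmul_mem_closedBall {θ : UnitAddCircle}
    (hθ : DenseRange fun n : ℤ => n • θ) (t : UnitAddCircle) {R : ℝ} (hR : 0 < R) (hR1 : R ≤ 1) :
    ∃ F : Finset ℤ, (F.card : ℝ) ≤ 3 / R ∧ ∀ y, ∃ n ∈ F, y + n • θ ∈ closedBall t (R / 2) := by
  set m := ⌈2 / R⌉₊
  have hm : 2 / R ≤ m := Nat.le_ceil _
  have hm0 : (0 : ℝ) < m := (by positivity : 0 < 2 / R).trans_le hm
  have hmR : 1 / (2 * (m : ℝ)) ≤ R / 4 := by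
    rw [div_le_iff₀ hR] at hm
    rw [div_le_iff₀ (by positivity)]
    linarith
  let e : ℕ → UnitAddCircle := fun i => (((i + 1 / 2) / m : ℝ) : UnitAddCircle)
  choose n hn using fun i => hθ.exists_dist_lt (t - e i) (by positivity : 0 < R / 4)
  refine ⟨(Finset.range m).image n, ?_, fun y => ?_⟩
  · calc (((Finset.range m).image n).card : ℝ) ≤ m := by
          exact_mod_cast Finset.card_image_le.trans_eq (Finset.card_range m)
      _ ≤ 2 / R + 1 := (Nat.ceil_lt_add_one (by positivity)).le
      _ ≤ 3 / R := by rw [div_add_one hR.ne']; gcongr; linarith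
  · obtain ⟨i, him, hi⟩ := exists_dist_coe_add_half_div_le (mod_cast hm0) y
    refine ⟨n i, Finset.mem_image_of_mem n (Finset.mem_range.2 him), ?_⟩
    have hdecomp : y + n i • θ - t = (y - e i) - (t - e i - n i • θ) := by abel
    have hni := (hn i).le
    rw [dist_eq_norm] at hi hni
    rw [mem_closedBall, dist_eq_norm, hdecomp]
    linarith [norm_sub_le (y - e i) (t - e i - n i • θ)]

lemma eventually_le_card_filter_nsmul_mem_closedBall {θ : UnitAddCircle}
    (hθ : DenseRange fun n : ℤ => n • θ) (t : UnitAddCircle) {R : ℝ} (hR : 0 < R) (hR1 : R ≤ 1) :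
    ∀ᶠ N : ℕ in atTop, R * N / 6 ≤
      ((Finset.Ico N (2 * N)).filter fun k => k • θ ∈ closedBall t (R / 2)).card := by
  obtain ⟨F, hFcard, hF⟩ := exists_finset_forall_add_zsmul_mem_closedBall hθ t hR hR1
  set M := F.sup Int.natAbs
  have hM : ∀ n ∈ F, n.natAbs ≤ M := fun n hn => Finset.le_sup (f := Int.natAbs) hn
  let F' : Finset ℕ := F.image fun n : ℤ => (n + M).toNat
  have hF'L : ∀ n ∈ F', n ≤ 2 * M := by
    intro n hn
    obtain ⟨j, hj, rfl⟩ := Finset.mem_image.1 hn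
    have := hM j hj
    lia
  have hF' : ∀ k : ℕ, ∃ n ∈ F', (k + n) • θ ∈ closedBall t (R / 2) := fun k => by
    obtain ⟨n, hn, hmem⟩ := hF ((k + M) • θ)
    refine ⟨(n + M).toNat, Finset.mem_image_of_mem _ hn, ?_⟩
    have hshift : (k + M) • θ + n • θ = (k + (n + M).toNat) • θ := by
      rw [← natCast_zsmul, ← natCast_zsmul, ← add_zsmul]
      congr 1
      have := hM n hn
      lia
    rwa [hshift] at hmem
  filter_upwards [eventually_ge_atTop (4 * M)] with N hN
  set B := (Finset.Ico N (2 * N)).filter fun k => k • θ ∈ closedBall t (R / 2)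
  have hcount : N ≤ F'.card * B.card + 2 * M := le_card_mul_card_filter_add hF'L hF' N
  have hF'card : (F'.card : ℝ) ≤ 3 / R :=
    le_trans (mod_cast Finset.card_image_le) hFcard
  have hN' : (4 * M : ℝ) ≤ N := mod_cast hN
  have hhalf : (N : ℝ) / 2 ≤ 3 / R * B.card := by
    have hcount' : (N : ℝ) ≤ F'.card * B.card + 2 * M := mod_cast hcount
    linarith [mul_le_mul_of_nonneg_right hF'card (Nat.cast_nonneg (α := ℝ) B.card)]
  rw [div_mul_eq_mul_div, le_div_iff₀ hR] at hhalf
  linarith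

end Recurrence

section Packing

lemma volume_ball_unitAddCircle (x : UnitAddCircle) {r : ℝ} (hr : 2 * r ≤ 1) :
    volume (ball x r) = ENNReal.ofReal (2 * r) := by
  rw [← measure_congr AddCircle.closedBall_ae_eq_ball, AddCircle.volume_closedBall, min_eq_right hr]

lemma card_mul_le_tsum_of_forall_mem_closedBall {ι κ : Type*} [Countable ι] {A : Finset κ}
    {y : κ → UnitAddCircle} {σ : ℝ} (hσ : σ ≤ 1)
    (hsep : (A : Set κ).Pairwise fun k l => σ ≤ dist (y k) (y l))
    {c : ι → UnitAddCircle} {ρ : ι → ℝ} (hcov : ∀ k ∈ A, ∃ i, y k ∈ closedBall (c i) (ρ i)) :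
    A.card * ENNReal.ofReal σ ≤ ∑' i, ENNReal.ofReal (2 * ρ i + σ) := by
  have hdisj : (A : Set κ).PairwiseDisjoint fun k => ball (y k) (σ / 2) := fun k hk l hl hkl =>
    ball_disjoint_ball (by simpa using hsep hk hl hkl)
  have hsub : ⋃ k ∈ A, ball (y k) (σ / 2) ⊆ ⋃ i, closedBall (c i) (ρ i + σ / 2) := by
    refine iUnion₂_subset fun k hk => ?_
    obtain ⟨i, hi⟩ := hcov k hk
    refine (ball_subset_closedBall.trans (closedBall_subset_closedBall' ?_)).trans
      (subset_iUnion (fun i => closedBall (c i) (ρ i + σ / 2)) i)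
    linarith [mem_closedBall.1 hi]
  calc A.card * ENNReal.ofReal σ = ∑ k ∈ A, volume (ball (y k) (σ / 2)) := by
        simp only [volume_ball_unitAddCircle _ (by linarith : 2 * (σ / 2) ≤ 1), mul_div_cancel₀,
          ne_eq, two_ne_zero, not_false_eq_true, Finset.sum_const, nsmul_eq_mul]
    _ = volume (⋃ k ∈ A, ball (y k) (σ / 2)) :=
      (measure_biUnion_finset hdisj fun _ _ => measurableSet_ball).symm
    _ ≤ volume (⋃ i, closedBall (c i) (ρ i + σ / 2)) := measure_mono hsub
    _ ≤ ∑' i, volume (closedBall (c i) (ρ i + σ / 2)) := measure_iUnion_le _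
    _ ≤ ∑' i, ENNReal.ofReal (2 * ρ i + σ) := ENNReal.tsum_le_tsum fun i => by
      rw [AddCircle.volume_closedBall]
      exact ENNReal.ofReal_le_ofReal ((min_le_right _ _).trans_eq (by ring))

end Packing

section MeetWeight

variable {X ι κ : Type*} {U : ι → Set X} {w : ι → ℝ≥0∞} {S : Set X}

/-- The total weight of those members of the weighted family `U` that meet `S`. -/
noncomputable def meetWeight (U : ι → Set X) (w : ι → ℝ≥0∞) (S : Set X) : ℝ≥0∞ :=
  ∑' i, {i | (U i ∩ S).Nonempty}.indicator w i

lemma meetWeight_le_tsum : meetWeight U w S ≤ ∑' i, w i :=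
  ENNReal.tsum_le_tsum fun i => indicator_le_self _ w i

lemma le_meetWeight {i : ι} (hi : (U i ∩ S).Nonempty) : w i ≤ meetWeight U w S :=
  (indicator_of_mem (s := {i | (U i ∩ S).Nonempty}) hi w).ge.trans (ENNReal.le_tsum i)

lemma meetWeight_le_meetWeight_mul {v : ι → ℝ≥0∞} {C : ℝ≥0∞}
    (h : ∀ i, (U i ∩ S).Nonempty → w i ≤ v i * C) : meetWeight U w S ≤ meetWeight U v S * C := by
  rw [meetWeight, meetWeight, ← ENNReal.tsum_mul_right]
  refine ENNReal.tsum_le_tsum fun i => ?_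
  rw [← indicator_mul_const]
  exact indicator_le_indicator' (h i)

lemma exists_meetWeight_mul_card_le {A : Finset κ} (hA : A.Nonempty) {S : κ → Set X}
    (hS : ∀ i, ∀ k ∈ A, ∀ l ∈ A, (U i ∩ S k).Nonempty → (U i ∩ S l).Nonempty → k = l) :
    ∃ k ∈ A, meetWeight U w (S k) * A.card ≤ ∑' i, w i := by
  obtain ⟨k, hk, hmin⟩ := A.exists_min_image (fun k => meetWeight U w (S k)) hA
  refine ⟨k, hk, ?_⟩
  calc meetWeight U w (S k) * A.card ≤ ∑ l ∈ A, meetWeight U w (S l) := by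
        rw [mul_comm, ← nsmul_eq_mul]
        exact A.card_nsmul_le_sum _ _ hmin
    _ = ∑' i, ∑ l ∈ A, {i | (U i ∩ S l).Nonempty}.indicator w i :=
        (Summable.tsum_finsetSum fun _ _ => ENNReal.summable).symm
    _ ≤ ∑' i, w i := ENNReal.tsum_le_tsum fun i => by
        by_cases hi : ∃ l ∈ A, (U i ∩ S l).Nonempty
        · obtain ⟨l, hl, hil⟩ := hi
          rw [Finset.sum_eq_single_of_mem l hl fun m hm hml => indicator_of_notMem
            (s := {i | (U i ∩ S m).Nonempty}) (fun him => hml (hS i m hm l hl him hil)) w]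
          exact indicator_le_self _ w i
        · push Not at hi
          rw [Finset.sum_eq_zero fun l hl => indicator_of_notMem (by simp [hi l hl]) w]
          exact zero_le

end MeetWeight

section Sparse

variable {ι κ : Type*} {c : ι → UnitAddCircle} {ρ : ι → ℝ} {t : UnitAddCircle} {R : ℝ}

/-- The family of obstacles `ball (c i) (ρ i)` is sparse on `closedBall t R`: the obstacles that
meet it have small total radius compared to `R`. Any constant that is small enough for
`exists_subset_forall_lt_of_isSparseOn` would do. -/
def IsSparseOn (c : ι → UnitAddCircle) (ρ : ι → ℝ) (t : UnitAddCircle) (R : ℝ) : Prop :=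
  meetWeight (fun i => ball (c i) (ρ i)) (fun i => ENNReal.ofReal (ρ i)) (closedBall t R) ≤
    ENNReal.ofReal (R / 8192)

lemma IsSparseOn.le_of_mem (h : IsSparseOn c ρ t R) (hR : 0 ≤ R) {x : UnitAddCircle}
    (hx : x ∈ closedBall t R) {i : ι} (hi : x ∈ ball (c i) (ρ i)) : ρ i ≤ R / 8192 :=
  (ENNReal.ofReal_le_ofReal_iff (by positivity)).1 <|
    (le_meetWeight (w := fun i => ENNReal.ofReal (ρ i)) ⟨x, hi, hx⟩).trans h

lemma card_mul_le_meetWeight_of_long [Countable ι] {A : Finset κ} {y : κ → UnitAddCircle} {σ : ℝ}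
    (hσ : σ ≤ 1) (hsep : (A : Set κ).Pairwise fun k l => σ ≤ dist (y k) (y l))
    {S : κ → Set UnitAddCircle} {I : Set UnitAddCircle}
    (hS : ∀ k ∈ A, S k ⊆ I ∩ closedBall (y k) (σ / 8))
    (hlong : ∀ k ∈ A, ∃ i, σ / 4 ≤ ρ i ∧ (ball (c i) (ρ i) ∩ S k).Nonempty) :
    A.card * ENNReal.ofReal σ ≤
      meetWeight (fun i => ball (c i) (ρ i)) (fun i => ENNReal.ofReal (ρ i)) I * 7 := by
  let J : Set ι := {i | σ / 4 ≤ ρ i ∧ (ball (c i) (ρ i) ∩ I).Nonempty}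
  have hcov : ∀ k ∈ A, ∃ i : J, y k ∈ closedBall (c i) (ρ i + σ / 8) := fun k hk => by
    obtain ⟨i, hi, x, hxi, hxS⟩ := hlong k hk
    obtain ⟨hxI, hxk⟩ := hS k hk hxS
    refine ⟨⟨i, hi, x, hxi, hxI⟩, ?_⟩
    rw [mem_closedBall]
    linarith [dist_triangle_left (y k) (c i) x, mem_ball.1 hxi, mem_closedBall.1 hxk]
  calc A.card * ENNReal.ofReal σ ≤ ∑' i : J, ENNReal.ofReal (2 * (ρ i + σ / 8) + σ) :=
        card_mul_le_tsum_of_forall_mem_closedBall hσ hsep hcov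
    _ ≤ ∑' i : J, ENNReal.ofReal (ρ i) * 7 := ENNReal.tsum_le_tsum fun i => by
        rw [← ENNReal.ofReal_ofNat, ← ENNReal.ofReal_mul' (by norm_num)]
        exact ENNReal.ofReal_le_ofReal (by linarith [i.2.1])
    _ = (∑' i, J.indicator (fun i => ENNReal.ofReal (ρ i)) i) * 7 := by
        rw [ENNReal.tsum_mul_right, tsum_subtype J fun i => ENNReal.ofReal (ρ i)]
    _ ≤ _ := by
        gcongr
        exact ENNReal.tsum_le_tsum fun i =>
          indicator_le_indicator_of_subset (fun i hi => hi.2) (fun _ => zero_le) i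

/-- The sets that meet an obstacle of radius at least `σ / 4` lie `σ`-separated within a bounded
multiple of the total radius of these obstacles, so there are few of them. -/
lemma exists_subset_forall_lt_of_isSparseOn [Countable ι] (h : IsSparseOn c ρ t R) (hR : 0 ≤ R)
    {A : Finset κ} {y : κ → UnitAddCircle} {σ : ℝ} (hσ : σ ≤ 1)
    (hsep : (A : Set κ).Pairwise fun k l => σ ≤ dist (y k) (y l)) {S : κ → Set UnitAddCircle}
    (hS : ∀ k ∈ A, S k ⊆ closedBall t R ∩ closedBall (y k) (σ / 8)) :
    ∃ B ⊆ A, A.card * σ ≤ B.card * σ + 7 * R / 8192 ∧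
      ∀ k ∈ B, ∀ i, (ball (c i) (ρ i) ∩ S k).Nonempty → ρ i < σ / 4 := by
  let P : κ → Prop := fun k => ∃ i, σ / 4 ≤ ρ i ∧ (ball (c i) (ρ i) ∩ S k).Nonempty
  refine ⟨A.filter fun k => ¬ P k, Finset.filter_subset _ _, ?_, fun k hk i hi => ?_⟩
  · have hbad : ((A.filter P).card : ℝ) * σ ≤ 7 * R / 8192 := by
      rw [← ENNReal.ofReal_le_ofReal_iff (by positivity), ENNReal.ofReal_mul (by positivity),
        ENNReal.ofReal_natCast]
      refine (card_mul_le_meetWeight_of_long hσ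
        (hsep.mono (Finset.coe_subset.2 (Finset.filter_subset P A)))
        (fun k hk => hS k (Finset.mem_of_mem_filter k hk))
        fun k hk => (Finset.mem_filter.1 hk).2).trans ((mul_le_mul_left h 7).trans_eq ?_)
      rw [← ENNReal.ofReal_ofNat 7, ← ENNReal.ofReal_mul (by positivity)]
      congr 1
      ring
    have hcard : (A.card : ℝ) = (A.filter P).card + (A.filter fun k => ¬ P k).card :=
      mod_cast (Finset.card_filter_add_card_filter_not P).symm
    rw [hcard, add_mul]
    linarith
  · by_contra! hlong
    exact (Finset.mem_filter.1 hk).2 ⟨i, hlong, hi⟩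

lemma exists_meetWeight_mul_card_le_of_short {A : Finset κ} (hA : A.Nonempty)
    {y : κ → UnitAddCircle} {σ : ℝ}
    (hsep : (A : Set κ).Pairwise fun k l => σ ≤ dist (y k) (y l)) {S : κ → Set UnitAddCircle}
    (hS : ∀ k ∈ A, S k ⊆ closedBall (y k) (σ / 8))
    (hshort : ∀ k ∈ A, ∀ i, (ball (c i) (ρ i) ∩ S k).Nonempty → ρ i < σ / 4) (w : ι → ℝ≥0∞) :
    ∃ k ∈ A, meetWeight (fun i => ball (c i) (ρ i)) w (S k) * A.card ≤ ∑' i, w i := by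
  have hdist : ∀ k ∈ A, ∀ i, (ball (c i) (ρ i) ∩ S k).Nonempty → dist (y k) (c i) < σ / 2 :=
    fun k hk i hi => by
      have hρ := hshort k hk i hi
      obtain ⟨x, hxi, hxS⟩ := hi
      linarith [dist_triangle_left (y k) (c i) x, mem_ball.1 hxi, mem_closedBall.1 (hS k hk hxS),
        dist_nonneg.trans_lt (mem_ball.1 hxi)]
  refine exists_meetWeight_mul_card_le hA fun i k hk l hl hik hil => ?_
  by_contra hkl
  linarith [hsep hk hl hkl, hdist k hk i hik, hdist l hl i hil,
    dist_triangle_right (y k) (y l) (c i)]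

end Sparse

section Gauge

variable {X ι : Type*} {s r Y : ℝ}

lemma omegaS_of_pos (hr : 0 < r) : omegaS s r = (-Real.log r) ^ (-s) := if_pos hr

lemma omegaS_of_nonpos (hr : r ≤ 0) : omegaS s r = 0 := if_neg hr.not_gt

lemma le_exp_neg_of_omegaS_le (hs : 0 < s) (hr : r < 1) (hY : 0 < Y)
    (h : omegaS s r ≤ Y ^ (-s)) : r ≤ Real.exp (-Y) := by
  rcases le_or_gt r 0 with hr0 | hr0
  · exact hr0.trans (Real.exp_pos _).le
  · rw [omegaS_of_pos hr0, Real.rpow_le_rpow_iff_of_neg (by linarith [Real.log_neg hr0 hr]) hY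
      (by linarith)] at h
    rw [← Real.log_le_iff_le_exp hr0]
    linarith

/-- With `L = -log r ≥ Y` this is `exp (-L / 2) ≤ L⁻¹ ≤ L ^ (-s)`. -/
lemma le_omegaS_mul_exp (hs : s ≤ 1) (hY : 1 ≤ Y) (hr : r ≤ Real.exp (-Y)) :
    r ≤ omegaS s r * Real.exp (-(Y / 2)) := by
  rcases le_or_gt r 0 with hr0 | hr0
  · simpa only [omegaS_of_nonpos hr0, zero_mul] using hr0
  set L := -Real.log r with hL
  have hYL : Y ≤ L := by linarith [(Real.log_le_iff_le_exp hr0).2 hr]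
  have hLexp : L ≤ Real.exp (L / 2) := by
    have hquad := Real.quadratic_le_exp_of_nonneg (by linarith : 0 ≤ L / 2)
    nlinarith [sq_nonneg (L - 2)]
  have hinv : Real.exp (-(L / 2)) ≤ L ^ (-s) := by
    calc Real.exp (-(L / 2)) = (Real.exp (L / 2))⁻¹ := Real.exp_neg _
      _ ≤ L ^ (-1 : ℝ) := by
        rw [Real.rpow_neg_one]
        exact inv_anti₀ (by linarith) hLexp
      _ ≤ L ^ (-s) := Real.rpow_le_rpow_of_exponent_le (by linarith) (by linarith)
  rw [omegaS_of_pos hr0, ← hL]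
  calc r = Real.exp (-(L / 2)) * Real.exp (-(L / 2)) := by
        rw [← Real.exp_add, ← neg_add, add_halves, hL, neg_neg, Real.exp_log hr0]
    _ ≤ L ^ (-s) * Real.exp (-(Y / 2)) := by
        have hL0 : 0 ≤ L := by linarith
        gcongr

lemma meetWeight_ofReal_le {U : ι → Set X} {S : Set X} {ρ : ι → ℝ} (hs : s ≤ 1) (hY : 1 ≤ Y)
    (hρ : ∀ i, (U i ∩ S).Nonempty → ρ i ≤ Real.exp (-Y)) :
    meetWeight U (fun i => ENNReal.ofReal (ρ i)) S ≤
      meetWeight U (fun i => ENNReal.ofReal (omegaS s (ρ i))) S *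
        ENNReal.ofReal (Real.exp (-(Y / 2))) :=
  meetWeight_le_meetWeight_mul fun i hi => by
    rw [← ENNReal.ofReal_mul' (Real.exp_pos _).le]
    exact ENNReal.ofReal_le_ofReal (le_omegaS_mul_exp hs hY (hρ i hi))

lemma meetWeight_ofReal_le_exp {U : ι → Set X} {S : Set X} {ρ : ι → ℝ} (hs0 : 0 < s) (hs : s ≤ 1)
    (hY : 1 ≤ Y) (hρ : ∀ i, ρ i < 1)
    (h : meetWeight U (fun i => ENNReal.ofReal (omegaS s (ρ i))) S ≤ ENNReal.ofReal (Y ^ (-s))) :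
    meetWeight U (fun i => ENNReal.ofReal (ρ i)) S ≤ ENNReal.ofReal (Real.exp (-(Y / 2))) := by
  have hY0 : 0 < Y := by linarith
  have hshort : ∀ i, (U i ∩ S).Nonempty → ρ i ≤ Real.exp (-Y) := fun i hi =>
    le_exp_neg_of_omegaS_le hs0 (hρ i) hY0 <| (ENNReal.ofReal_le_ofReal_iff (by positivity)).1 <|
      (le_meetWeight (w := fun i => ENNReal.ofReal (omegaS s (ρ i))) hi).trans h
  refine (meetWeight_ofReal_le hs hY hshort).trans (mul_le_of_le_one_left' (h.trans ?_))
  exact ENNReal.ofReal_le_one.2 (Real.rpow_le_one_of_one_le_of_nonpos hY (by linarith))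

end Gauge

/-- Admissible rates of approximation: `ψ n` decays faster than `1 / n`, the spacing of an orbit of
length `n`, but slower than `exp (-(D * n ^ (1 / s)))`, the length of an interval of `omegaS s`
weight of order `1 / n`. -/
structure IsAdmissibleRate (s : ℝ) (ψ : ℕ → ℝ) : Prop where
  pos : ∀ n, 0 < ψ n
  antitone : Antitone ψ
  tendsto_mul : Tendsto (fun n : ℕ => n * ψ n) atTop (𝓝 0)
  isLittleO_exp : ∀ D > 0, (fun n : ℕ => Real.exp (-(D * (n : ℝ) ^ (1 / s)))) =o[atTop] ψ

lemma IsAdmissibleRate.eventually_exp_le {s : ℝ} {ψ : ℕ → ℝ} (hψ : IsAdmissibleRate s ψ) {a η : ℝ}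
    (ha : 0 < a) (hη : 0 < η) :
    ∀ᶠ N : ℕ in atTop, Real.exp (-((a * N) ^ (1 / s) / 2)) ≤ η * ψ (2 * N) := by
  have hdouble : Tendsto (fun N : ℕ => 2 * N) atTop atTop :=
    tendsto_id.const_mul_atTop' two_pos
  have hD : 0 < (a / 2) ^ (1 / s) / 2 := by positivity
  filter_upwards [hdouble.eventually ((hψ.isLittleO_exp _ hD).bound hη)] with N hN
  rw [Real.norm_of_nonneg (Real.exp_pos _).le, Real.norm_of_nonneg (hψ.pos _).le] at hN
  convert hN using 3
  rw [div_mul_eq_mul_div, ← Real.mul_rpow (by positivity) (by positivity)]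
  congr 2
  push_cast
  ring

section Target

variable {θ : UnitAddCircle} {ψ : ℕ → ℝ} {k : ℕ} {x : UnitAddCircle}

/-- The centre of `target θ ψ k`. -/
noncomputable def targetCenter (θ : UnitAddCircle) (ψ : ℕ → ℝ) (k : ℕ) : UnitAddCircle :=
  k • θ + ((3 * ψ k / 4 : ℝ) : UnitAddCircle)

/-- A ball whose points approximate `k • θ` to within `ψ k`, but not within `ψ k / 2`. -/
noncomputable def target (θ : UnitAddCircle) (ψ : ℕ → ℝ) (k : ℕ) : Set UnitAddCircle :=
  closedBall (targetCenter θ ψ k) (ψ k / 4)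

lemma dist_le_of_mem_target (hψ : 0 ≤ ψ k) (hx : x ∈ target θ ψ k) : dist x (k • θ) ≤ ψ k := by
  have hshift : dist (targetCenter θ ψ k) (k • θ) ≤ 3 * ψ k / 4 := by
    rw [targetCenter, dist_eq_norm, add_sub_cancel_left]
    exact (norm_coe_unitAddCircle_le _).trans_eq (abs_of_nonneg (by positivity))
  linarith [dist_triangle x (targetCenter θ ψ k) (k • θ), mem_closedBall.1 hx]

lemma le_dist_of_mem_target (hψ : 0 ≤ ψ k) (hψ2 : ψ k ≤ 1 / 2) (hx : x ∈ target θ ψ k) :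
    ψ k / 2 ≤ dist x (k • θ) := by
  have hshift : dist (targetCenter θ ψ k) (k • θ) = 3 * ψ k / 4 := by
    rw [targetCenter, dist_eq_norm, add_sub_cancel_left]
    rw [(AddCircle.norm_coe_eq_abs_iff 1 one_ne_zero).2, abs_of_nonneg (by positivity)]
    rw [abs_of_nonneg (by positivity), abs_one]
    linarith
  linarith [dist_triangle_left (targetCenter θ ψ k) (k • θ) x, mem_closedBall.1 hx]

lemma frequently_exists_target_subset {α : ℝ} (hα : Irrational α) (hψ0 : ∀ n, 0 < ψ n)
    (hψa : Antitone ψ) (hψn : Tendsto (fun n : ℕ => n * ψ n) atTop (𝓝 0)) (t : UnitAddCircle)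
    {R : ℝ} (hR : 0 < R) (hR1 : R ≤ 1) :
    ∃ᶠ N : ℕ in atTop,
      (∀ j : ℤ, j ≠ 0 → |j| ≤ 4 * N → 1 / (32 * (N : ℝ)) ≤ ‖j • (α : UnitAddCircle)‖) ∧
      ∃ A ⊆ Finset.Ico N (2 * N), R * N / 6 ≤ A.card ∧
        ∀ k ∈ A, target α ψ k ⊆ closedBall t R ∩ closedBall (k • (α : UnitAddCircle))
          (1 / (32 * N) / 8) := by
  have hdense : DenseRange fun n : ℤ => n • (α : UnitAddCircle) :=
    AddCircle.denseRange_zsmul_coe_iff.2 (by rwa [div_one])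
  refine ((frequently_forall_le_norm_zsmul hα).and_eventually
    ((eventually_le_card_filter_nsmul_mem_closedBall hdense t hR hR1).and
    ((hψn.eventually_le_const (by positivity : 0 < min (1 / 256) (R / 2))).and
    (eventually_ge_atTop 1)))).mono ?_
  rintro N ⟨hsep, hcard, hNψ, hN⟩
  refine ⟨hsep, _, Finset.filter_subset _ _, hcard, fun k hk => ?_⟩
  rw [Finset.mem_filter, Finset.mem_Ico] at hk
  have hN' : (1 : ℝ) ≤ N := mod_cast hN
  have hψk : ψ k ≤ ψ N := hψa hk.1.1
  have hψσ : ψ k ≤ 1 / (32 * N) / 8 := by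
    rw [div_div, le_div_iff₀ (by positivity)]
    nlinarith [min_le_left (1 / 256) (R / 2)]
  have hψR : ψ k ≤ R / 2 := by nlinarith [min_le_right (1 / 256) (R / 2), hψ0 N]
  refine fun x hx => ⟨?_, closedBall_subset_closedBall hψσ (dist_le_of_mem_target (hψ0 k).le hx)⟩
  rw [mem_closedBall]
  linarith [dist_triangle x (k • (α : UnitAddCircle)) t, dist_le_of_mem_target (hψ0 k).le hx,
    mem_closedBall.1 hk.2]

end Target

section Guard

lemma summable_natAbs_add_one_rpow {p : ℝ} (hp : p < -1) :
    Summable fun z : ℤ => ((z.natAbs : ℝ) + 1) ^ p := by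
  have hnat : Summable fun n : ℕ => ((n : ℝ) + 1) ^ p := by
    simpa using (summable_nat_add_iff 1).2 (Real.summable_nat_rpow.2 hp)
  exact Summable.of_nat_of_neg (by simpa using hnat) (by simpa using hnat)

variable {θ : UnitAddCircle} {ψ : ℕ → ℝ} {κ : ℝ}

/-- The radius of the neighbourhood of `z • θ` that is to be avoided. -/
noncomputable def guardRadius (κ : ℝ) (ψ : ℕ → ℝ) (z : ℤ) : ℝ :=
  κ * ψ z.natAbs / ((z.natAbs : ℝ) + 1) ^ 3

lemma meetWeight_guard_le (hψ0 : ∀ n, 0 ≤ ψ n) (hψ : Antitone ψ) (hκ : 0 ≤ κ)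
    {S : Set UnitAddCircle} {M : ℕ}
    (hS : ∀ z : ℤ, (ball (z • θ) (guardRadius κ ψ z) ∩ S).Nonempty → M ≤ z.natAbs) :
    meetWeight (fun z : ℤ => ball (z • θ) (guardRadius κ ψ z))
        (fun z => ENNReal.ofReal (guardRadius κ ψ z)) S ≤
      ENNReal.ofReal (∑' z : ℤ, ((z.natAbs : ℝ) + 1) ^ (-2 : ℝ)) *
        ENNReal.ofReal (κ * ψ M / (M + 1)) := by
  rw [ENNReal.ofReal_tsum_of_nonneg (fun _ => by positivity)
    (summable_natAbs_add_one_rpow (by norm_num))]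
  refine (meetWeight_le_meetWeight_mul fun z hz => ?_).trans
    (mul_le_mul_left meetWeight_le_tsum _)
  rw [← ENNReal.ofReal_mul (by positivity)]
  refine ENNReal.ofReal_le_ofReal ?_
  have hM : (M : ℝ) ≤ z.natAbs := mod_cast hS z hz
  have hψM : ψ z.natAbs ≤ ψ M := hψ (hS z hz)
  have := hψ0 M
  have hz1 : (0 : ℝ) < z.natAbs + 1 := by positivity
  calc guardRadius κ ψ z
      = ((z.natAbs : ℝ) + 1) ^ (-2 : ℝ) * (κ * ψ z.natAbs / (z.natAbs + 1)) := by
        rw [guardRadius, Real.rpow_neg hz1.le, Real.rpow_two]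
        field_simp
    _ ≤ _ := by gcongr

end Guard

section Step

variable {ι : Type*} {θ t : UnitAddCircle} {ψ : ℕ → ℝ} {κ R : ℝ} {c : ι → UnitAddCircle} {ρ : ι → ℝ}
  {A : Finset ℕ} {N : ℕ}

lemma pairwise_le_dist_nsmul
    (hsep : ∀ j : ℤ, j ≠ 0 → |j| ≤ 4 * N → 1 / (32 * (N : ℝ)) ≤ ‖j • θ‖)
    (hA : A ⊆ Finset.Ico N (2 * N)) :
    (A : Set ℕ).Pairwise fun k l => 1 / (32 * (N : ℝ)) ≤ dist (k • θ) (l • θ) := by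
  intro k hk l hl hkl
  have hk' := Finset.mem_Ico.1 (hA hk)
  have hl' := Finset.mem_Ico.1 (hA hl)
  rw [dist_eq_norm, ← natCast_zsmul, ← natCast_zsmul, ← sub_smul]
  exact hsep _ (by lia) (abs_le.2 (by lia))

/-- Each of the two sparse families spoils at most `R * N / 24` of the targets. -/
lemma exists_subset_forall_short [Countable ι] (hN : 0 < N) (hR : 0 ≤ R)
    (hsep : (A : Set ℕ).Pairwise fun k l => 1 / (32 * (N : ℝ)) ≤ dist (k • θ) (l • θ))
    (hcard : R * N / 6 ≤ A.card)
    (hA : ∀ k ∈ A, target θ ψ k ⊆ closedBall t R ∩ closedBall (k • θ) (1 / (32 * N) / 8))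
    {ι' : Type*} [Countable ι'] {c' : ι' → UnitAddCircle} {ρ' : ι' → ℝ}
    (h : IsSparseOn c ρ t R) (h' : IsSparseOn c' ρ' t R) :
    ∃ B ⊆ A, R * N / 12 ≤ B.card ∧
      (∀ k ∈ B, ∀ i, (ball (c i) (ρ i) ∩ target θ ψ k).Nonempty → ρ i < 1 / (32 * N) / 4) ∧
      ∀ k ∈ B, ∀ i, (ball (c' i) (ρ' i) ∩ target θ ψ k).Nonempty → ρ' i < 1 / (32 * N) / 4 := by
  have hN1 : (1 : ℝ) ≤ N := mod_cast hN
  have hσ : 1 / (32 * (N : ℝ)) ≤ 1 := by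
    rw [div_le_one₀ (by positivity)]
    linarith
  obtain ⟨B, hBA, hBcard, hB⟩ := exists_subset_forall_lt_of_isSparseOn h hR hσ hsep hA
  obtain ⟨B', hB'B, hB'card, hB'⟩ := exists_subset_forall_lt_of_isSparseOn h' hR hσ
    (hsep.mono (Finset.coe_subset.2 hBA)) fun k hk => hA k (hBA hk)
  refine ⟨B', hB'B.trans hBA, ?_, fun k hk => hB k (hB'B hk), hB'⟩
  have hloss : (A.card : ℝ) ≤ B'.card + 14 * R / 8192 * (32 * N) := by
    rw [← mul_le_mul_iff_left₀ (by positivity : 0 < 1 / (32 * (N : ℝ))), add_mul, mul_assoc,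
      mul_one_div_cancel (by positivity)]
    linarith
  nlinarith [mul_nonneg hR (Nat.cast_nonneg (α := ℝ) N)]

lemma le_natAbs_of_guard_inter_target_nonempty {k : ℕ} (hk : k ∈ Finset.Ico N (2 * N))
    (hsep : ∀ j : ℤ, j ≠ 0 → |j| ≤ 4 * N → 1 / (32 * (N : ℝ)) ≤ ‖j • θ‖) (hκ : κ ≤ 1 / 2)
    (hψ0 : 0 ≤ ψ k) (hψ2 : ψ k ≤ 1 / 2)
    (hk8 : target θ ψ k ⊆ closedBall (k • θ) (1 / (32 * N) / 8)) {z : ℤ}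
    (hshort : guardRadius κ ψ z < 1 / (32 * N) / 4)
    (hz : (ball (z • θ) (guardRadius κ ψ z) ∩ target θ ψ k).Nonempty) : 2 * N ≤ z.natAbs := by
  obtain ⟨x, hxz, hxk⟩ := hz
  rw [Finset.mem_Ico] at hk
  by_contra! hzN
  rcases eq_or_ne z k with rfl | hzk
  · have hguard : guardRadius κ ψ k ≤ ψ k / 2 := by
      rw [guardRadius, Int.natAbs_natCast, div_le_iff₀ (by positivity)]
      have hpow : (1 : ℝ) ≤ ((k : ℝ) + 1) ^ 3 := one_le_pow₀ (by simp)
      nlinarith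
    rw [natCast_zsmul] at hxz
    linarith [le_dist_of_mem_target hψ0 hψ2 hxk, mem_ball.1 hxz]
  · have hfar := hsep (z - k) (sub_ne_zero.2 hzk) (abs_le.2 (by lia))
    rw [sub_smul, natCast_zsmul, ← dist_eq_norm] at hfar
    have hN : 0 < 1 / (32 * (N : ℝ)) := by
      have : (0 : ℝ) < N := mod_cast (by lia : 0 < N)
      positivity
    linarith [dist_triangle_left (z • θ) (k • θ) x, mem_ball.1 hxz, mem_closedBall.1 (hk8 hxk)]

lemma isSparseOn_guard_target (hψ0 : ∀ n, 0 ≤ ψ n) (hψ : Antitone ψ) (hκ : 0 ≤ κ) {k : ℕ}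
    (hk : k ≤ N) (hN : κ / (N + 1) * ∑' z : ℤ, ((z.natAbs : ℝ) + 1) ^ (-2 : ℝ) ≤ 1 / 32768)
    (hfar : ∀ z : ℤ, (ball (z • θ) (guardRadius κ ψ z) ∩ target θ ψ k).Nonempty → N ≤ z.natAbs) :
    IsSparseOn (fun z : ℤ => z • θ) (guardRadius κ ψ) (targetCenter θ ψ k) (ψ k / 4) := by
  refine (meetWeight_guard_le hψ0 hψ hκ hfar).trans ?_
  rw [← ENNReal.ofReal_mul (tsum_nonneg fun _ => by positivity)]
  refine ENNReal.ofReal_le_ofReal ?_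
  calc (∑' z : ℤ, ((z.natAbs : ℝ) + 1) ^ (-2 : ℝ)) * (κ * ψ N / (N + 1))
      = κ / (N + 1) * (∑' z : ℤ, ((z.natAbs : ℝ) + 1) ^ (-2 : ℝ)) * ψ N := by ring
    _ ≤ 1 / 32768 * ψ k := mul_le_mul hN (hψ hk) (hψ0 N) (by norm_num)
    _ = ψ k / 4 / 8192 := by ring

/-- By pigeonhole some target meets at most `12 * T / (R * N)` of the `omegaS` weight of the cover,
so each interval it meets is exponentially short. -/
lemma exists_isSparseOn_target {s T : ℝ} (hs0 : 0 < s) (hs : s ≤ 1) (hψ : Antitone ψ)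
    (hρ : ∀ i, ρ i < 1) (hT0 : 0 < T)
    (hT : ∑' i, ENNReal.ofReal (omegaS s (ρ i)) ≤ ENNReal.ofReal T) (hN : 0 < N) (hR : 0 < R)
    (hNT : 1 ≤ R / (12 * T) * N)
    (hNψ : Real.exp (-((R / (12 * T) * N) ^ (1 / s) / 2)) ≤ 1 / 32768 * ψ (2 * N))
    (hA : A ⊆ Finset.Ico N (2 * N)) (hcard : R * N / 12 ≤ A.card)
    (hsep : (A : Set ℕ).Pairwise fun k l => 1 / (32 * (N : ℝ)) ≤ dist (k • θ) (l • θ))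
    (hA8 : ∀ k ∈ A, target θ ψ k ⊆ closedBall (k • θ) (1 / (32 * N) / 8))
    (hshort : ∀ k ∈ A, ∀ i, (ball (c i) (ρ i) ∩ target θ ψ k).Nonempty → ρ i < 1 / (32 * N) / 4) :
    ∃ k ∈ A, IsSparseOn c ρ (targetCenter θ ψ k) (ψ k / 4) := by
  have hN0 : (0 : ℝ) < N := mod_cast hN
  have hcard0 : 0 < A.card := by
    have : (0 : ℝ) < A.card := lt_of_lt_of_le (by positivity) hcard
    exact_mod_cast this
  obtain ⟨k, hk, hkT⟩ := exists_meetWeight_mul_card_le_of_short (Finset.card_pos.1 hcard0) hsep hA8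
    hshort fun i => ENNReal.ofReal (omegaS s (ρ i))
  have hY : (((R / (12 * T) * N) ^ (1 / s)) ^ (-s)) = T / (R * N / 12) := by
    rw [← Real.rpow_mul (by positivity), one_div, mul_neg, inv_mul_cancel₀ hs0.ne',
      Real.rpow_neg_one]
    field_simp
  have hshare : meetWeight (fun i => ball (c i) (ρ i)) (fun i => ENNReal.ofReal (omegaS s (ρ i)))
      (target θ ψ k) ≤ ENNReal.ofReal (((R / (12 * T) * N) ^ (1 / s)) ^ (-s)) := by
    rw [hY, ENNReal.ofReal_div_of_pos (by positivity)]
    refine ENNReal.le_div_iff_mul_le (by simp [hN0, hR]) (by simp) |>.2 ?_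
    refine le_trans (mul_le_mul_right ?_ _) (hkT.trans hT)
    exact ENNReal.ofReal_le_of_le_toReal (by simpa using hcard)
  refine ⟨k, hk, (meetWeight_ofReal_le_exp hs0 hs (Real.one_le_rpow hNT (by positivity)) hρ
    hshare).trans (ENNReal.ofReal_le_ofReal ?_)⟩
  have := hψ (Finset.mem_Ico.1 (hA hk)).2.le
  linarith

lemma exists_gt_isSparseOn_target [Countable ι] {α s T : ℝ} (hα : Irrational α) (hs0 : 0 < s)
    (hs : s ≤ 1) (hψ : IsAdmissibleRate s ψ) (hκ0 : 0 ≤ κ) (hκ : κ ≤ 1 / 2) (hρ : ∀ i, ρ i < 1)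
    (hT0 : 0 < T) (hT : ∑' i, ENNReal.ofReal (omegaS s (ρ i)) ≤ ENNReal.ofReal T) (hR : 0 < R)
    (hR1 : R ≤ 1)
    (hguard : IsSparseOn (fun z : ℤ => z • (α : UnitAddCircle)) (guardRadius κ ψ) t R)
    (hcover : IsSparseOn c ρ t R) (n₀ : ℕ) :
    ∃ k ≥ n₀, target α ψ k ⊆ closedBall t R ∧ ψ k ≤ 1 / 2 ∧
      IsSparseOn (fun z : ℤ => z • (α : UnitAddCircle)) (guardRadius κ ψ)
        (targetCenter α ψ k) (ψ k / 4) ∧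
      IsSparseOn c ρ (targetCenter α ψ k) (ψ k / 4) := by
  have hguardTail : ∀ᶠ M : ℕ in atTop,
      κ / (M + 1) * ∑' z : ℤ, ((z.natAbs : ℝ) + 1) ^ (-2 : ℝ) ≤ 1 / 32768 := by
    have htend := ((tendsto_one_div_add_atTop_nhds_zero_nat (𝕜 := ℝ)).const_mul κ).mul_const
      (∑' z : ℤ, ((z.natAbs : ℝ) + 1) ^ (-2 : ℝ))
    simp only [mul_one_div, mul_zero, zero_mul] at htend
    exact htend.eventually_le_const (by norm_num)
  have hshare : ∀ᶠ N : ℕ in atTop, 1 ≤ R / (12 * T) * N :=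
    (tendsto_natCast_atTop_atTop.const_mul_atTop (by positivity)).eventually_ge_atTop 1
  have hexp : ∀ᶠ N : ℕ in atTop,
      Real.exp (-((R / (12 * T) * N) ^ (1 / s) / 2)) ≤ 1 / 32768 * ψ (2 * N) :=
    hψ.eventually_exp_le (by positivity) (by norm_num)
  obtain ⟨N, ⟨hsep, A, hAN, hcard, hA⟩, hguardTail, hshare, hexp, hNψ, hNn₀, hN⟩ :=
    ((frequently_exists_target_subset hα hψ.pos hψ.antitone hψ.tendsto_mul t hR hR1).and_eventually
      (((tendsto_id.const_mul_atTop' two_pos).eventually hguardTail).and <| hshare.and <|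
        hexp.and <| (hψ.tendsto_mul.eventually_le_const one_half_pos).and <|
        (eventually_ge_atTop n₀).and (eventually_gt_atTop 0))).exists
  obtain ⟨B, hBA, hBcard, hguardShort, hcoverShort⟩ := exists_subset_forall_short hN hR.le
    (pairwise_le_dist_nsmul hsep hAN) hcard hA hguard hcover
  have hBN := hBA.trans hAN
  obtain ⟨k, hk, hkcover⟩ := exists_isSparseOn_target hs0 hs hψ.antitone hρ hT0 hT hN hR hshare
    hexp hBN hBcard (pairwise_le_dist_nsmul hsep hBN)
    (fun k hk => (hA k (hBA hk)).trans inter_subset_right) hcoverShort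
  have hkN := Finset.mem_Ico.1 (hBN hk)
  have hψk2 : ψ k ≤ 1 / 2 := (hψ.antitone hkN.1).trans <|
    (le_mul_of_one_le_left (hψ.pos N).le (mod_cast hN)).trans hNψ
  refine ⟨k, hNn₀.trans hkN.1, (hA k (hBA hk)).trans inter_subset_left, hψk2, ?_, hkcover⟩
  exact isSparseOn_guard_target (fun n => (hψ.pos n).le) hψ.antitone hκ0 hkN.2.le hguardTail
    fun z hz => le_natAbs_of_guard_inter_target_nonempty (hBN hk) hsep hκ (hψ.pos k).le hψk2
      ((hA k (hBA hk)).trans inter_subset_right) (hguardShort k hk z hz) hz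

end Step

section Construction

lemma exists_frequently_mem_of_forall_exists_subset {X : Type*} [TopologicalSpace X]
    [CompactSpace X] {I : ℕ → Set X} (hclosed : ∀ k, IsClosed (I k)) (hne : ∀ k, (I k).Nonempty)
    {P : ℕ → Prop} (h0 : ∃ k, P k) (hstep : ∀ k, P k → ∀ n₀, ∃ l ≥ n₀, P l ∧ I l ⊆ I k) :
    ∃ x, ∃ᶠ k in atTop, P k ∧ x ∈ I k := by
  obtain ⟨k₀, hk₀⟩ := h0
  choose next hge hnext hsub using fun k : {k // P k} => hstep k k.2
  let f : ℕ → {k // P k} := fun n => n.rec ⟨k₀, hk₀⟩ fun n k => ⟨next k n, hnext k n⟩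
  obtain ⟨x, hx⟩ := IsCompact.nonempty_iInter_of_sequence_nonempty_isCompact_isClosed
    (fun n => I (f n).1) (fun n => hsub (f n) n) (fun n => hne _) (hclosed _).isCompact
    fun n => hclosed _
  exact ⟨x, frequently_atTop.2 fun n =>
    ⟨f (n + 1), hge (f n) n, (f (n + 1)).2, mem_iInter.1 hx (n + 1)⟩⟩

variable {s : ℝ} {ψ : ℕ → ℝ}

lemma IsAdmissibleRate.tendsto_zero (hψ : IsAdmissibleRate s ψ) : Tendsto ψ atTop (𝓝 0) := by
  refine squeeze_zero' (.of_forall fun n => (hψ.pos n).le) ?_ hψ.tendsto_mul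
  filter_upwards [eventually_ge_atTop 1] with n hn
  exact le_mul_of_one_le_left (hψ.pos n).le (mod_cast hn)

lemma notMem_ball_of_frequently_isSparseOn {ι : Type*} {c : ι → UnitAddCircle} {ρ : ι → ℝ}
    {θ x : UnitAddCircle} (hψ : IsAdmissibleRate s ψ)
    (hx : ∃ᶠ k in atTop, x ∈ target θ ψ k ∧ IsSparseOn c ρ (targetCenter θ ψ k) (ψ k / 4)) (i : ι) :
    x ∉ ball (c i) (ρ i) := by
  intro hi
  have hρ : 0 < ρ i := dist_nonneg.trans_lt (mem_ball.1 hi)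
  obtain ⟨k, ⟨hxk, hk⟩, hψk⟩ := (hx.and_eventually (hψ.tendsto_zero.eventually_lt_const hρ)).exists
  have hψ0 := hψ.pos k
  linarith [hk.le_of_mem (by positivity) hxk hi]

/-- The points which `k • θ` approximates to within `ψ k` for infinitely many `k`, while no multiple
of `θ` approximates them essentially better. -/
def exactApproxSet (θ : UnitAddCircle) (ψ : ℕ → ℝ) : Set UnitAddCircle :=
  {x | (∃ᶠ k : ℕ in atTop, dist x (k • θ) ≤ ψ k) ∧
    ∃ κ > 0, ∀ z : ℤ, guardRadius κ ψ z ≤ dist x (z • θ)}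

lemma exists_isSparseOn_guard_one (hψ : IsAdmissibleRate s ψ) (θ : UnitAddCircle) :
    ∃ κ > 0, κ ≤ 1 / 2 ∧ IsSparseOn (fun z : ℤ => z • θ) (guardRadius κ ψ) 0 1 := by
  set C := ∑' z : ℤ, ((z.natAbs : ℝ) + 1) ^ (-2 : ℝ)
  have hC : 0 ≤ C := tsum_nonneg fun _ => by positivity
  have hψ0 := hψ.pos 0
  have hκ : 0 < 8192 * C * ψ 0 + 2 := by positivity
  refine ⟨1 / (8192 * C * ψ 0 + 2), by positivity,
    one_div_le_one_div_of_le two_pos (le_add_of_nonneg_left (by positivity)), ?_⟩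
  refine (meetWeight_guard_le (fun n => (hψ.pos n).le) hψ.antitone (by positivity)
    fun z _ => Nat.zero_le _).trans ?_
  rw [← ENNReal.ofReal_mul hC]
  refine ENNReal.ofReal_le_ofReal ?_
  rw [Nat.cast_zero, zero_add, div_one, one_div_mul_eq_div, mul_div_assoc', div_le_div_iff₀ hκ
    (by norm_num)]
  linarith

/-- A point in infinitely many nested targets, each of which is sparse for both the guards and the
cover, lies in no obstacle: the radius of an obstacle met by all these targets would be `0`. -/
lemma exists_mem_exactApproxSet_forall_notMem_ball {ι : Type*} [Countable ι] {α T Y : ℝ}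
    (hα : Irrational α) (hs0 : 0 < s) (hs : s ≤ 1) (hψ : IsAdmissibleRate s ψ)
    {c : ι → UnitAddCircle} {ρ : ι → ℝ} (hT0 : 0 < T)
    (hT : ∑' i, ENNReal.ofReal (omegaS s (ρ i)) ≤ ENNReal.ofReal T) (hY : 1 ≤ Y)
    (hρ : ∀ i, ρ i ≤ Real.exp (-Y)) (hTY : T * Real.exp (-(Y / 2)) ≤ 1 / 8192) :
    ∃ x ∈ exactApproxSet α ψ, ∀ i, x ∉ ball (c i) (ρ i) := by
  have hρ1 : ∀ i, ρ i < 1 := fun i => (hρ i).trans_lt (Real.exp_lt_one_iff.2 (by linarith))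
  obtain ⟨κ, hκ0, hκ, hguard⟩ := exists_isSparseOn_guard_one hψ α
  have hcover : IsSparseOn c ρ 0 1 := by
    refine (meetWeight_ofReal_le hs hY fun i _ => hρ i).trans ?_
    refine (mul_le_mul_left (meetWeight_le_tsum.trans hT) _).trans ?_
    rw [← ENNReal.ofReal_mul hT0.le]
    exact ENNReal.ofReal_le_ofReal hTY
  obtain ⟨x, hx⟩ := exists_frequently_mem_of_forall_exists_subset (I := target α ψ)
    (P := fun k => ψ k ≤ 1 / 2 ∧
      IsSparseOn (fun z : ℤ => z • (α : UnitAddCircle)) (guardRadius κ ψ)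
        (targetCenter α ψ k) (ψ k / 4) ∧
      IsSparseOn c ρ (targetCenter α ψ k) (ψ k / 4))
    (fun k => isClosed_closedBall)
    (fun k => nonempty_closedBall.2 (by have := hψ.pos k; positivity))
    (by
      obtain ⟨k, -, -, hk⟩ := exists_gt_isSparseOn_target hα hs0 hs hψ hκ0.le hκ hρ1 hT0 hT one_pos
        le_rfl hguard hcover 0
      exact ⟨k, hk⟩)
    fun k ⟨hk2, hkguard, hkcover⟩ n₀ => by
      obtain ⟨l, hl, hlk, hgood⟩ := exists_gt_isSparseOn_target hα hs0 hs hψ hκ0.le hκ hρ1 hT0 hT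
        (by have := hψ.pos k; positivity) (by linarith [hk2]) hkguard hkcover n₀
      exact ⟨l, hl, hgood, hlk⟩
  refine ⟨x, ⟨hx.mono fun k hk => dist_le_of_mem_target (hψ.pos k).le hk.2, κ, hκ0, fun z => ?_⟩,
    notMem_ball_of_frequently_isSparseOn hψ (hx.mono fun k hk => ⟨hk.2, hk.1.2.2⟩)⟩
  exact not_lt.1 (notMem_ball_of_frequently_isSparseOn hψ
    (hx.mono fun k hk => ⟨hk.2, hk.1.2.1⟩) z)

end Construction

section InfiniteMeasure

variable {α : ℝ} {ψ : ℕ → ℝ}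

lemma exists_cover_of_gaugeHaus_lt {ω : ℝ → ℝ} {S : Set ℝ} {M : ℝ≥0∞} (h : gaugeHaus ω S < M)
    {ε : ℝ} (hε : 0 < ε) :
    ∃ a b : ℕ → ℝ, S ⊆ ⋃ i, Ioo (a i) (b i) ∧ (∀ i, a i ≤ b i ∧ b i - a i ≤ ε) ∧
      ∑' i, ENNReal.ofReal (ω (b i - a i)) < M := by
  have hcover := (le_iSup₂ (f := fun (ε : ℝ) (_ : 0 < ε) =>
    ⨅ (a : ℕ → ℝ) (b : ℕ → ℝ) (_ : S ⊆ ⋃ i, Ioo (a i) (b i))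
      (_ : ∀ i, a i ≤ b i ∧ b i - a i ≤ ε), ∑' i, ENNReal.ofReal (ω (b i - a i)))
    ε hε).trans_lt h
  simpa only [iInf_lt_iff, exists_prop] using hcover

lemma gaugeHaus_omegaS_eq_top (hα : Irrational α) {s : ℝ} (hs0 : 0 < s) (hs : s ≤ 1)
    (hψ : IsAdmissibleRate s ψ) {S : Set ℝ}
    (hS : exactApproxSet α ψ ⊆ ((↑) : ℝ → UnitAddCircle) '' S) :
    gaugeHaus (omegaS s) S = ⊤ := by
  by_contra hfinite
  set T : ℝ := (gaugeHaus (omegaS s) S).toReal + 1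
  have hT0 : 0 < T := by positivity
  have hlt : gaugeHaus (omegaS s) S < ENNReal.ofReal T :=
    (ENNReal.lt_ofReal_iff_toReal_lt hfinite).2 (lt_add_one _)
  have hdecay : Tendsto (fun Y : ℝ => T * Real.exp (-(Y / 2))) atTop (𝓝 0) := by
    simpa only [mul_zero, Function.comp_def, id] using (Real.tendsto_exp_neg_atTop_nhds_zero.comp
      (tendsto_id.atTop_div_const two_pos)).const_mul T
  obtain ⟨Y, hTY, hY⟩ := ((hdecay.eventually_le_const (by norm_num : (0 : ℝ) < 1 / 8192)).and
    (eventually_ge_atTop 1)).exists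
  obtain ⟨a, b, hcover, hab, hsum⟩ := exists_cover_of_gaugeHaus_lt hlt (Real.exp_pos (-Y))
  obtain ⟨x, hx, hxout⟩ := exists_mem_exactApproxSet_forall_notMem_ball hα hs0 hs hψ
    (c := fun i => (a i : UnitAddCircle)) hT0 hsum.le hY (fun i => (hab i).2) hTY
  obtain ⟨y, hyS, rfl⟩ := hS hx
  obtain ⟨i, hai, hbi⟩ := mem_iUnion.1 (hcover hyS)
  refine hxout i (mem_ball.2 ?_)
  calc dist (y : UnitAddCircle) (a i)
    _ = ‖((y - a i : ℝ) : UnitAddCircle)‖ := by rw [dist_eq_norm, AddCircle.coe_sub]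
    _ ≤ |y - a i| := norm_coe_unitAddCircle_le _
    _ < b i - a i := by rw [abs_of_pos (sub_pos.2 hai)]; linarith

end InfiniteMeasure

section ResonanceStrength

variable {α x κ : ℝ} {δ : ℝ≥0∞} {ψ : ℕ → ℝ}

lemma coe_intCast_mul_eq_zsmul (α : ℝ) (k : ℤ) :
    ((k * α : ℝ) : UnitAddCircle) = k • (α : UnitAddCircle) := by
  rw [← zsmul_eq_mul, AddCircle.coe_zsmul]

lemma distZ_sub_mul_eq_dist (α x : ℝ) (k : ℤ) :
    distZ (x - k * α) = dist (x : UnitAddCircle) (k • (α : UnitAddCircle)) := by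
  rw [distZ_eq_norm, dist_eq_norm, AddCircle.coe_sub, coe_intCast_mul_eq_zsmul]

lemma exists_eq_mul_add_iff_exists_dist_eq_zero :
    (∃ k m : ℤ, x = k * α + m) ↔
      ∃ k : ℤ, dist (x : UnitAddCircle) (k • (α : UnitAddCircle)) = 0 := by
  refine exists_congr fun k => ?_
  rw [dist_eq_norm, norm_eq_zero, ← coe_intCast_mul_eq_zsmul, ← AddCircle.coe_sub,
    AddCircle.coe_eq_zero_iff]
  refine exists_congr fun m => ?_
  rw [zsmul_one, eq_sub_iff_add_eq', eq_comm]

lemma resStrength_eq_limsup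
    (hx : ∀ k : ℤ, 0 < dist (x : UnitAddCircle) (k • (α : UnitAddCircle))) :
    resStrength α x = limsup (fun k : ℤ => ENNReal.ofReal
      (-Real.log (dist (x : UnitAddCircle) (k • (α : UnitAddCircle))) / k.natAbs)) cofinite := by
  rw [resStrength, if_neg]
  · simp only [distZ_sub_mul_eq_dist, Nat.cast_natAbs, Int.cast_abs]
  · rw [exists_eq_mul_add_iff_exists_dist_eq_zero]
    exact fun ⟨k, hk⟩ => (hx k).ne' hk

lemma tendsto_natAbs_cofinite_atTop : Tendsto Int.natAbs cofinite atTop := by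
  rw [← Nat.cofinite_eq_atTop]
  refine Tendsto.cofinite_of_finite_preimage_singleton fun n => ?_
  refine (toFinite {(n : ℤ), -(n : ℤ)}).subset fun z (hz : z.natAbs = n) => ?_
  exact Int.natAbs_eq_iff.1 hz

lemma tendsto_mul_log_add_one_sub_div (A B : ℝ) :
    Tendsto (fun n : ℕ => (A * Real.log (n + 1) - B) / n) atTop (𝓝 0) := by
  have hsucc : (fun n : ℕ => (n : ℝ) + 1) =O[atTop] fun n : ℕ => (n : ℝ) :=
    (Asymptotics.isBigO_refl _ _).add (Asymptotics.isLittleO_const_id_atTop (1 : ℝ)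
      |>.comp_tendsto tendsto_natCast_atTop_atTop).isBigO
  have hlog : (fun n : ℕ => Real.log ((n : ℝ) + 1)) =o[atTop] fun n : ℕ => (n : ℝ) :=
    (Real.isLittleO_log_id_atTop.comp_tendsto
      (tendsto_natCast_atTop_atTop.atTop_add (tendsto_const_nhds (x := (1 : ℝ))))).trans_isBigO
      hsucc
  have hconst : (fun _ : ℕ => B) =o[atTop] fun n : ℕ => (n : ℝ) :=
    (Asymptotics.isLittleO_const_id_atTop B).comp_tendsto tendsto_natCast_atTop_atTop
  exact ((hlog.const_mul_left A).sub hconst).tendsto_div_nhds_zero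

lemma neg_log_guardRadius (hκ : 0 < κ) (hψ : ∀ n, 0 < ψ n) (z : ℤ) :
    -Real.log (guardRadius κ ψ z) = -Real.log (ψ z.natAbs) +
      (3 * Real.log (z.natAbs + 1) - Real.log κ) := by
  rw [guardRadius, Real.log_div (mul_pos hκ (hψ _)).ne' (by positivity),
    Real.log_mul hκ.ne' (hψ _).ne', Real.log_pow]
  push_cast
  ring

lemma resStrength_le_of_forall_guardRadius_le (hκ : 0 < κ) (hψ : ∀ n, 0 < ψ n)
    (hδ : Tendsto (fun n : ℕ => ENNReal.ofReal (-Real.log (ψ n) / n)) atTop (𝓝 δ))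
    (hx : ∀ z : ℤ, guardRadius κ ψ z ≤ dist (x : UnitAddCircle) (z • (α : UnitAddCircle))) :
    resStrength α x ≤ δ := by
  have hguard : ∀ z, 0 < guardRadius κ ψ z := fun z =>
    div_pos (mul_pos hκ (hψ _)) (by positivity)
  have hsum := (hδ.add (ENNReal.tendsto_ofReal
    (tendsto_mul_log_add_one_sub_div 3 (Real.log κ)))).comp tendsto_natAbs_cofinite_atTop
  rw [ENNReal.ofReal_zero, add_zero] at hsum
  rw [resStrength_eq_limsup fun z => (hguard z).trans_le (hx z), ← hsum.limsup_eq]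
  refine limsup_le_limsup (Eventually.of_forall fun z => ?_)
  refine (ENNReal.ofReal_le_ofReal ?_).trans ENNReal.ofReal_add_le
  rw [← add_div, ← neg_log_guardRadius hκ hψ]
  gcongr
  exacts [hguard z, hx z]

lemma le_resStrength_of_frequently_dist_le
    (hδ : Tendsto (fun n : ℕ => ENNReal.ofReal (-Real.log (ψ n) / n)) atTop (𝓝 δ))
    (hx : ∃ᶠ k : ℕ in atTop, dist (x : UnitAddCircle) (k • (α : UnitAddCircle)) ≤ ψ k) :
    δ ≤ resStrength α x := by
  by_cases horbit : ∃ k m : ℤ, x = k * α + m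
  · rw [resStrength, if_pos horbit]
    exact le_top
  rw [exists_eq_mul_add_iff_exists_dist_eq_zero, not_exists] at horbit
  have hpos : ∀ k : ℤ, 0 < dist (x : UnitAddCircle) (k • (α : UnitAddCircle)) := fun k =>
    dist_nonneg.lt_of_ne' (horbit k)
  rw [resStrength_eq_limsup hpos]
  refine le_of_forall_lt fun d hd => ?_
  obtain ⟨e, hde, heδ⟩ := exists_between hd
  refine hde.trans_le (le_limsup_of_frequently_le ?_)
  refine (Nat.cast_injective (R := ℤ)).tendsto_cofinite.frequently ?_
  rw [Nat.cofinite_eq_atTop]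
  refine (hx.and_eventually (hδ.eventually_const_le heδ)).mono fun k ⟨hk, hek⟩ => ?_
  refine hek.trans (ENNReal.ofReal_le_ofReal ?_)
  have hk0 := hpos k
  rw [Int.natAbs_natCast, natCast_zsmul] at *
  gcongr

lemma exactApproxSet_subset_image_resSet (hψ : ∀ n, 0 < ψ n)
    (hδ : Tendsto (fun n : ℕ => ENNReal.ofReal (-Real.log (ψ n) / n)) atTop (𝓝 δ)) :
    exactApproxSet α ψ ⊆ ((↑) : ℝ → UnitAddCircle) '' resSet α δ := by
  rintro x ⟨hfreq, κ, hκ, hguard⟩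
  obtain ⟨y, hy, rfl⟩ : x ∈ ((↑) : ℝ → UnitAddCircle) '' Icc 0 (0 + 1) := by
    rw [AddCircle.coe_image_Icc_eq]
    exact mem_univ x
  rw [zero_add] at hy
  exact ⟨y, ⟨hy, (resStrength_le_of_forall_guardRadius_le hκ hψ hδ hguard).antisymm
    (le_resStrength_of_frequently_dist_le hδ hfreq)⟩, rfl⟩

end ResonanceStrength

section Rate

variable {s c p : ℝ}

lemma exists_tendsto_ofReal_mul_rpow_div {δ : ℝ≥0∞} (hδ : 0 < δ) (hs : 0 < s) (hs1 : s < 1) :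
    ∃ c p : ℝ, 0 < c ∧ 1 ≤ p ∧ p < 1 / s ∧
      Tendsto (fun n : ℕ => ENNReal.ofReal (c * (n : ℝ) ^ p / n)) atTop (𝓝 δ) := by
  have hs' : 1 < 1 / s := by rwa [lt_div_iff₀ hs, one_mul]
  rcases eq_or_ne δ ⊤ with rfl | hδtop
  · obtain ⟨p, hp1, hps⟩ := exists_between hs'
    refine ⟨1, p, one_pos, hp1.le, hps, ?_⟩
    have hpow := (tendsto_rpow_atTop (sub_pos.2 hp1)).comp (tendsto_natCast_atTop_atTop (R := ℝ))
    refine (ENNReal.tendsto_ofReal_atTop.comp hpow).congr' ?_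
    filter_upwards [eventually_ne_atTop 0] with n hn
    rw [Function.comp_apply, Function.comp_apply, one_mul,
      Real.rpow_sub_one (Nat.cast_ne_zero.2 hn)]
  · refine ⟨δ.toReal, 1, ENNReal.toReal_pos hδ.ne' hδtop, le_rfl, hs', ?_⟩
    refine tendsto_const_nhds.congr' ?_
    filter_upwards [eventually_ne_atTop 0] with n hn
    rw [Real.rpow_one, mul_div_cancel_right₀ _ (Nat.cast_ne_zero.2 hn),
      ENNReal.ofReal_toReal hδtop]

lemma isAdmissibleRate_exp_neg_mul_rpow (hc : 0 < c) (hp : 1 ≤ p) (hps : p < 1 / s) :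
    IsAdmissibleRate s fun n => Real.exp (-(c * (n : ℝ) ^ p)) where
  pos n := Real.exp_pos _
  antitone m n hmn := by
    have : 0 ≤ p := by linarith
    dsimp only
    gcongr
  tendsto_mul := by
    have hlinear : Tendsto (fun n : ℕ => (n : ℝ) ^ (1 : ℝ) * Real.exp (-c * n)) atTop (𝓝 0) :=
      (tendsto_rpow_mul_exp_neg_mul_atTop_nhds_zero 1 c hc).comp tendsto_natCast_atTop_atTop
    refine squeeze_zero' (Eventually.of_forall fun n => by positivity) ?_ hlinear
    filter_upwards [eventually_ge_atTop 1] with n hn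
    have hn1 : (1 : ℝ) ≤ n := mod_cast hn
    have hnp : (n : ℝ) ≤ (n : ℝ) ^ p := Real.self_le_rpow_of_one_le hn1 hp
    rw [Real.rpow_one, neg_mul]
    gcongr
  isLittleO_exp D hD := by
    refine Real.isLittleO_exp_comp_exp_comp.2 ?_
    have hp0 : 0 < p := by linarith
    have hgap : Tendsto (fun t : ℝ => t ^ p * (D * t ^ (1 / s - p) - c)) atTop atTop :=
      (tendsto_rpow_atTop hp0).atTop_mul_atTop₀ (tendsto_atTop_add_const_right _ (-c)
        ((tendsto_rpow_atTop (sub_pos.2 hps)).const_mul_atTop hD))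
    refine (hgap.comp tendsto_natCast_atTop_atTop).congr' ?_
    filter_upwards [eventually_gt_atTop 0] with n hn
    have hn0 : (0 : ℝ) < n := mod_cast hn
    rw [Function.comp_apply, Real.rpow_sub hn0]
    field_simp
    ring

end Rate

lemma gaugeHaus_resSet_eq_top {α : ℝ} (hα : Irrational α) {δ : ℝ≥0∞} (hδ : 0 < δ) {s : ℝ}
    (hs : 0 < s) (hs1 : s < 1) : gaugeHaus (omegaS s) (resSet α δ) = ⊤ := by
  obtain ⟨c, p, hc, hp, hps, hlim⟩ := exists_tendsto_ofReal_mul_rpow_div hδ hs hs1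
  have hψ := isAdmissibleRate_exp_neg_mul_rpow hc hp hps
  refine gaugeHaus_omegaS_eq_top hα hs hs1.le hψ (exactApproxSet_subset_image_resSet hψ.pos ?_)
  simpa only [Real.log_exp, neg_neg] using hlim

section FiniteMeasure

lemma gaugeHaus_le_tsum_of_frequently_mem_ball {ι : Type*} [Countable ι] [Infinite ι]
    {ω : ℝ → ℝ} (hω : ω 0 = 0) {S : Set ℝ} {y ρ : ι → ℝ} (hρ0 : ∀ i, 0 ≤ ρ i)
    (hρ : Tendsto ρ cofinite (𝓝 0)) (hS : ∀ x ∈ S, ∃ᶠ i in cofinite, x ∈ ball (y i) (ρ i)) :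
    gaugeHaus ω S ≤ ∑' i, ENNReal.ofReal (ω (2 * ρ i)) := by
  obtain ⟨e⟩ := nonempty_equiv_of_countable (α := ℕ) (β := ι)
  refine iSup₂_le fun ε hε => ?_
  set r : ι → ℝ := fun i => if 2 * ρ i ≤ ε then ρ i else 0
  have hlength : ∀ i, y i + r i - (y i - r i) = 2 * r i := fun i => by ring
  refine iInf_le_of_le (fun n => y (e n) - r (e n)) (iInf_le_of_le (fun n => y (e n) + r (e n))
    (iInf_le_of_le (fun x hx => ?_) (iInf_le_of_le (fun n => ?_) ?_)))
  · have hshort : ∀ᶠ i in cofinite, ρ i ≤ ε / 2 := hρ.eventually_le_const (half_pos hε)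
    obtain ⟨i, hxi, hi⟩ := ((hS x hx).and_eventually hshort).exists
    refine mem_iUnion.2 ⟨e.symm i, ?_⟩
    rw [Real.ball_eq_Ioo] at hxi
    simp only [e.apply_symm_apply]
    rwa [show r i = ρ i from if_pos (by linarith)]
  · have hr : 0 ≤ r (e n) ∧ 2 * r (e n) ≤ ε := by
      simp only [r]
      split_ifs with h
      exacts [⟨hρ0 _, h⟩, ⟨le_rfl, by linarith⟩]
    exact ⟨by linarith, (hlength _).trans_le hr.2⟩
  · simp only [hlength]
    rw [e.tsum_eq fun i => ENNReal.ofReal (ω (2 * r i))]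
    refine ENNReal.tsum_le_tsum fun i => ?_
    simp only [r]
    split_ifs
    · rfl
    · simp only [mul_zero, hω, ENNReal.ofReal_zero, zero_le]

lemma exists_abs_sub_fract_add_eq_dist {x : ℝ} (hx : x ∈ Icc (0 : ℝ) 1) (t : ℝ) :
    ∃ e : Finset.Icc (-1 : ℤ) 1, |x - (Int.fract t + (e : ℤ))| =
      dist (x : UnitAddCircle) (t : UnitAddCircle) := by
  have hround : round (x - Int.fract t) ∈ Finset.Icc (-1 : ℤ) 1 := by
    have := Int.fract_nonneg t
    have := Int.fract_lt_one t
    rw [Finset.mem_Icc, round_eq, Int.le_floor, ← Int.lt_add_one_iff, Int.floor_lt]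
    push_cast
    constructor <;> linarith [hx.1, hx.2]
  refine ⟨⟨_, hround⟩, ?_⟩
  have hfract : ((Int.fract t : ℝ) : UnitAddCircle) = t := by
    rw [Int.fract, AddCircle.coe_sub, sub_eq_self, AddCircle.coe_eq_zero_iff]
    exact ⟨⌊t⌋, zsmul_one _⟩
  rw [← sub_sub, ← UnitAddCircle.norm_eq, AddCircle.coe_sub, hfract, dist_eq_norm]

/-- The indices `(k, j, e)` of a cover of a resonance set: `k` is the multiple of `α` approached,
`e` selects the representative of `k * α` modulo `1`, and `j` numbers shrinking copies of one
interval, so that an orbit point lies in infinitely many intervals. -/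
abbrev CoverIndex : Type := ℤ × ℕ × Finset.Icc (-1 : ℤ) 1

/-- The centre of the interval with index `i` in the cover of a resonance set for `α`. -/
noncomputable def coverCenter (α : ℝ) (i : CoverIndex) : ℝ :=
  Int.fract (i.1 * α) + (i.2.2 : ℤ)

/-- Minus the logarithm of the length of the interval with index `i` in the cover of a set of
points of resonance strength greater than `d`. -/
def coverExponent (d : ℝ) (i : CoverIndex) : ℝ := d * ((i.1.natAbs + 1) * (i.2.1 + 1))

variable {α x d s : ℝ}

lemma coverExponent_pos (hd : 0 < d) (i : CoverIndex) : 0 < coverExponent d i := by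
  unfold coverExponent
  positivity

lemma summable_coverExponent_rpow (hd : 0 ≤ d) (hs : 1 < s) :
    Summable fun i : CoverIndex => coverExponent d i ^ (-s) := by
  have hint := summable_natAbs_add_one_rpow (neg_lt_neg hs)
  have hnat : Summable fun j : ℕ => ((j : ℝ) + 1) ^ (-s) := by
    simpa only [Function.comp_def, Int.natAbs_natCast] using
      hint.comp_injective (Nat.cast_injective (R := ℤ))
  have hconst : Summable fun _ : Finset.Icc (-1 : ℤ) 1 => d ^ (-s) := Summable.of_finite
  refine (hint.mul_of_nonneg (hnat.mul_of_nonneg hconst ?_ ?_) ?_ ?_).congr fun i => ?_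
  any_goals exact fun _ => by simp only [Pi.zero_apply]; positivity
  rw [coverExponent, Real.mul_rpow hd (by positivity), Real.mul_rpow (by positivity)
    (by positivity)]
  ring

lemma tendsto_exp_neg_of_tendsto_rpow_neg {ι : Type*} {l : Filter ι} {u : ι → ℝ}
    (hu : ∀ i, 0 < u i) (hs : 0 < s) (h : Tendsto (fun i => u i ^ (-s)) l (𝓝 0)) :
    Tendsto (fun i => Real.exp (-u i)) l (𝓝 0) := by
  have hinv : Tendsto (fun i => (u i)⁻¹) l (𝓝 0) := by
    have hroot := h.rpow_const (p := 1 / s) (Or.inr (by positivity))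
    rw [Real.zero_rpow (by positivity)] at hroot
    refine hroot.congr fun i => ?_
    rw [← Real.rpow_mul (hu i).le, neg_mul, mul_one_div_cancel hs.ne', Real.rpow_neg_one]
  refine squeeze_zero (fun i => (Real.exp_pos _).le) (fun i => ?_) hinv
  rw [Real.exp_neg]
  exact inv_anti₀ (hu i) (by linarith [Real.add_one_le_exp (u i)])

lemma frequently_dist_lt_of_lt_resStrength (hd : 0 ≤ d)
    (hx : ∀ k : ℤ, 0 < dist (x : UnitAddCircle) (k • (α : UnitAddCircle)))
    (h : ENNReal.ofReal d < resStrength α x) :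
    ∃ᶠ k : ℤ in cofinite,
      dist (x : UnitAddCircle) (k • (α : UnitAddCircle)) < Real.exp (-(d * k.natAbs)) := by
  rw [resStrength_eq_limsup hx] at h
  refine ((frequently_lt_of_lt_limsup (by isBoundedDefault) h).and_eventually
    (tendsto_natAbs_cofinite_atTop.eventually_gt_atTop 0)).mono fun k ⟨hk, hk0⟩ => ?_
  rw [ENNReal.ofReal_lt_ofReal_iff_of_nonneg hd, lt_div_iff₀ (Nat.cast_pos.2 hk0)] at hk
  rw [← Real.log_lt_iff_lt_exp (hx k)]
  linarith

lemma frequently_mem_ball_coverCenter (hd : 0 < d) (hx : x ∈ Icc (0 : ℝ) 1)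
    (h : ENNReal.ofReal (2 * d) < resStrength α x) :
    ∃ᶠ i in cofinite, x ∈ ball (coverCenter α i) (Real.exp (-coverExponent d i) / 2) := by
  choose e he using fun k : ℤ => exists_abs_sub_fract_add_eq_dist hx (k * α)
  simp only [coe_intCast_mul_eq_zsmul] at he
  have hdist : ∀ (k : ℤ) (j : ℕ), dist x (coverCenter α (k, j, e k)) =
      dist (x : UnitAddCircle) (k • (α : UnitAddCircle)) := fun k _ => he k
  by_cases horbit : ∃ k : ℤ, dist (x : UnitAddCircle) (k • (α : UnitAddCircle)) = 0
  · obtain ⟨k, hk⟩ := horbit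
    have hinj : Function.Injective fun j : ℕ => ((k, j, e k) : CoverIndex) := fun i j hij => by
      simpa only [Prod.mk.injEq, true_and, and_true] using hij
    refine hinj.tendsto_cofinite.frequently (Eventually.of_forall fun j => ?_).frequently
    rw [mem_ball, hdist, hk]
    positivity
  · have hinj : Function.Injective fun k : ℤ => ((k, 0, e k) : CoverIndex) := fun k l hkl =>
      congrArg Prod.fst hkl
    have hpos : ∀ k : ℤ, 0 < dist (x : UnitAddCircle) (k • (α : UnitAddCircle)) := fun k =>
      dist_nonneg.lt_of_ne' (not_exists.1 horbit k)
    have hlarge : ∀ᶠ k : ℤ in cofinite, 1 + Real.log 2 / d ≤ k.natAbs :=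
      (tendsto_natCast_atTop_atTop.comp tendsto_natAbs_cofinite_atTop).eventually_ge_atTop _
    refine hinj.tendsto_cofinite.frequently (((frequently_dist_lt_of_lt_resStrength
      (by positivity) hpos h).and_eventually hlarge).mono fun k ⟨hk, hklarge⟩ => ?_)
    rw [mem_ball, hdist]
    have hexponent : coverExponent d (k, 0, e k) + Real.log 2 ≤ 2 * d * k.natAbs := by
      have := mul_le_mul_of_nonneg_left hklarge hd.le
      rw [mul_add, mul_div_cancel₀ _ hd.ne'] at this
      simp only [coverExponent, Nat.cast_zero]
      linarith
    calc dist (x : UnitAddCircle) (k • (α : UnitAddCircle))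
      _ < Real.exp (-(2 * d * k.natAbs)) := hk
      _ ≤ Real.exp (-coverExponent d (k, 0, e k) - Real.log 2) := by gcongr; linarith
      _ = Real.exp (-coverExponent d (k, 0, e k)) / 2 := by
        rw [Real.exp_sub, Real.exp_log two_pos]

lemma gaugeHaus_resSet_lt_top (α : ℝ) {δ : ℝ≥0∞} (hδ : 0 < δ) (hs : 1 < s) :
    gaugeHaus (omegaS s) (resSet α δ) < ⊤ := by
  obtain ⟨d, hd0, hdδ⟩ : ∃ d : ℝ, 0 < d ∧ ENNReal.ofReal (2 * d) < δ := by
    obtain ⟨r, hr0, hrδ⟩ := ENNReal.lt_iff_exists_nnreal_btwn.1 hδ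
    refine ⟨r / 2, half_pos (mod_cast hr0), ?_⟩
    rwa [mul_div_cancel₀ _ two_ne_zero, ENNReal.ofReal_coe_nnreal]
  have hsummable := summable_coverExponent_rpow hd0.le hs
  have hradius := (tendsto_exp_neg_of_tendsto_rpow_neg (coverExponent_pos hd0)
    (zero_lt_one.trans hs) hsummable.tendsto_cofinite_zero).div_const 2
  rw [zero_div] at hradius
  have : Nonempty (Finset.Icc (-1 : ℤ) 1) := (Finset.nonempty_Icc.2 (by norm_num)).to_subtype
  calc gaugeHaus (omegaS s) (resSet α δ)
    _ ≤ ∑' i, ENNReal.ofReal (omegaS s (2 * (Real.exp (-coverExponent d i) / 2))) :=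
      gaugeHaus_le_tsum_of_frequently_mem_ball (omegaS_of_nonpos le_rfl)
        (fun i => by positivity) hradius
        fun x hx => frequently_mem_ball_coverCenter hd0 hx.1 (hx.2 ▸ hdδ)
    _ = ∑' i, ENNReal.ofReal (coverExponent d i ^ (-s)) := by
      simp only [mul_div_cancel₀ _ (two_ne_zero (α := ℝ)), omegaS_of_pos (Real.exp_pos _),
        Real.log_exp, neg_neg]
    _ < ⊤ := hsummable.tsum_ofReal_lt_top

end FiniteMeasure

theorem logHausDim_resSet_eq_one_general {α : ℝ} (hα : Irrational α) {δ : ℝ≥0∞} (hδ : 0 < δ) :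
    logHausDim (resSet α δ) = 1 := by
  have hmem : ∀ s > 1, s ∈ {s : ℝ | 0 < s ∧ gaugeHaus (omegaS s) (resSet α δ) < ⊤} :=
    fun s hs => ⟨zero_lt_one.trans hs, gaugeHaus_resSet_lt_top α hδ hs⟩
  refine le_antisymm (le_of_forall_gt_imp_ge_of_dense fun s hs => ?_) ?_
  · exact csInf_le ⟨0, fun t ht => ht.1.le⟩ (hmem s hs)
  · refine le_csInf ⟨2, hmem 2 one_lt_two⟩ fun s hs => ?_
    by_contra! hs1
    exact hs.2.ne (gaugeHaus_resSet_eq_top hα hδ hs.1 hs1)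

/-- For irrational `α ∈ [0,1]` and `0 < δ ≤ ∞`, the log-Hausdorff dimension of the exact
resonance level set `D(δ)` equals `1`. -/
theorem logHausDim_resSet_eq_one (α : ℝ) (hα : Irrational α)
    (hα01 : α ∈ Set.Icc (0 : ℝ) 1) (δ : ℝ≥0∞) (hδ : 0 < δ) :
    logHausDim (resSet α δ) = 1 :=
  logHausDim_resSet_eq_one_general hα hδ
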